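/- Let d ≥ 3 and let H = F_2[T, X_2, …, X_d]/(T², X_i² − T·X_i : 2 ≤ i ≤ d). Then H is not strongly Koszul: there exists no minimal system X of homogeneous generators of the augmentation ideal H_+ such that for every subset Y ⊊ X and every x ∈ X \ Y, the colon ideal (Y) : x is generated by a subset of X. -/

import Mathlib

open MvPolynomial

/-- The colon ideal `I : x = {a | a * x ∈ I}`. -/
def colonIdeal {A : Type*} [Ring A] (I : Ideal A) (x : A) : Ideal A :=
  Submodule.comap (LinearMap.toSpanSingleton A A x) I

/-- The defining relations `T², X_i² − T·X_i` (with `T = X 0`) of the cohomology of a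
2-rigid field of level 2. -/
noncomputable def rgRel (d : ℕ) [NeZero d] : Ideal (MvPolynomial (Fin d) (ZMod 2)) :=
  Ideal.span {p | p = X 0 ^ 2 ∨ ∃ i : Fin d, i ≠ 0 ∧ p = X i ^ 2 - X 0 * X i}

/-- The algebra `H = F₂[T, X₂, …, X_d]/(T², X_i² − T·X_i)`. -/
abbrev RGH (d : ℕ) [NeZero d] := MvPolynomial (Fin d) (ZMod 2) ⧸ rgRel d

/-- The images `t = gen d 0`, `α_i = gen d i` of the variables in `H`. -/
noncomputable def gen (d : ℕ) [NeZero d] (i : Fin d) : RGH d :=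
  Ideal.Quotient.mk (rgRel d) (X i)

/-- The augmentation ideal `H_+` of `H` (the ideal of elements with zero constant term,
which is generated by the images of the variables since `H` is generated in degree 1). -/
noncomputable def Hplus (d : ℕ) [NeZero d] : Ideal (RGH d) :=
  Ideal.span (Set.range (gen d))

/-- An element of `H` is homogeneous (of some degree `n`) if it is the image of a
homogeneous polynomial of degree `n`; since the relation ideal is homogeneous this
agrees with the quotient grading. -/
def IsHomogElem (d : ℕ) [NeZero d] (h : RGH d) : Prop :=
  ∃ n : ℕ, ∃ p : MvPolynomial (Fin d) (ZMod 2),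
    p.IsHomogeneous n ∧ Ideal.Quotient.mk (rgRel d) p = h

/-!
Modulo `H_+²` an element of `H_+` is a linear form, its linear part, and by Nakayama's lemma the
linear parts of a minimal system `X` of generators of `H_+` are linearly independent. In degree two
the relations say that `v² = t v` for every linear form `v`, and nonzero linear forms `u ≠ t` and
`v` have product zero only if `v = u + t`. Since the elements of `H_+` are nilpotent, the
annihilator of `x ∈ X` is nonzero. If it is generated by a subset of `X` and `x` has linear part
`u ≠ t`, then `X` contains an element with linear part `u + t`. For `d ≥ 3` this applies to two
linear parts `u`, `v` of elements of `X` that are independent modulo `t`, and the relation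
`u + (u + t) + v + (v + t) = 0` contradicts linear independence.
-/

theorem colonIdeal_bot_ne_bot {A : Type*} [Ring A] [Nontrivial A] {x : A}
    (hx : IsNilpotent x) : colonIdeal ⊥ x ≠ ⊥ := by
  intro h
  have hreg : x ∈ nonZeroDivisorsRight A := fun a ha => by
    have hmem : a ∈ colonIdeal ⊥ x := ha
    rwa [h, Ideal.mem_bot] at hmem
  obtain ⟨n, hn⟩ := hx
  exact zero_notMem_nonZeroDivisorsRight (hn ▸ pow_mem hreg n)

theorem span_sdiff_singleton_eq_of_mem_sup_sq {A : Type*} [CommRing A] {I : Ideal A}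
    (hfg : I.FG) (hI : I ≤ Ideal.jacobson ⊥) {X : Set A} (hX : Ideal.span X = I) {x : A}
    (hx : x ∈ Ideal.span (X \ {x}) ⊔ I ^ 2) : Ideal.span (X \ {x}) = I := by
  refine le_antisymm (hX ▸ Ideal.span_mono Set.sdiff_subset) ?_
  refine Submodule.le_of_le_smul_of_le_jacobson_bot hfg hI ?_
  rw [smul_eq_mul, ← pow_two]
  nth_rw 1 [← hX]
  refine Ideal.span_le.mpr fun y hy => ?_
  obtain rfl | hyx := eq_or_ne y x
  · exact hx
  · exact Ideal.mem_sup_left (Ideal.subset_span ⟨hy, hyx⟩)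

theorem span_pair_ne_top {K V : Type*} [DivisionRing K] [AddCommGroup V] [Module K V]
    (hV : 3 ≤ Module.finrank K V) (a b : V) : Submodule.span K {a, b} ≠ ⊤ := by
  classical
  intro h
  have hle : Set.finrank K (({a, b} : Finset V) : Set V) ≤ 2 :=
    (finrank_span_finset_le_card _).trans Finset.card_le_two
  rw [Set.finrank, Finset.coe_pair, h, finrank_top] at hle
  omega

theorem exists_ne_apply_ne_zero_of_notMem_span_single {ι R : Type*} [DecidableEq ι] [Semiring R]
    {i : ι} {v : ι → R} (hv : v ∉ Submodule.span R {Pi.single i 1}) : ∃ j ≠ i, v j ≠ 0 := by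
  by_contra! h
  refine hv (Submodule.mem_span_singleton.mpr ⟨v i, ?_⟩)
  ext j
  obtain rfl | hj := eq_or_ne j i
  · simp
  · simp [hj, h j hj]

namespace RGH

variable {d : ℕ} [NeZero d]

theorem gen_sq (i : Fin d) : gen d i ^ 2 = gen d 0 * gen d i := by
  obtain rfl | hi := eq_or_ne i 0
  · exact pow_two _
  · rw [gen, gen, ← map_pow, ← map_mul, Ideal.Quotient.eq]
    exact Ideal.subset_span (Or.inr ⟨i, hi, rfl⟩)

theorem gen_zero_sq : gen d 0 ^ 2 = 0 := by
  rw [gen, ← map_pow, Ideal.Quotient.eq_zero_iff_mem]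
  exact Ideal.subset_span (Or.inl rfl)

theorem isNilpotent_gen (i : Fin d) : IsNilpotent (gen d i) := by
  have h0 : IsNilpotent (gen d 0) := ⟨2, gen_zero_sq⟩
  refine IsNilpotent.of_pow (m := 2) ?_
  rw [gen_sq]
  exact (Commute.all _ _).isNilpotent_mul_right h0

theorem Hplus_le_nilradical : Hplus d ≤ nilradical (RGH d) := by
  refine Ideal.span_le.mpr ?_
  rintro _ ⟨i, rfl⟩
  exact isNilpotent_gen i

theorem Hplus_fg : (Hplus d).FG :=
  Submodule.fg_span (Set.finite_range _)

@[elab_as_elim]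
theorem induction_on {P : RGH d → Prop} (h : RGH d)
    (algebraMap : ∀ c : ZMod 2, P (algebraMap (ZMod 2) (RGH d) c))
    (add : ∀ a b, P a → P b → P (a + b)) (mul_gen : ∀ a i, P a → P (a * gen d i)) : P h := by
  obtain ⟨p, rfl⟩ := Ideal.Quotient.mk_surjective h
  induction p using MvPolynomial.induction_on with
  | C c => exact algebraMap c
  | add p q hp hq => exact map_add (Ideal.Quotient.mk (rgRel d)) p q ▸ add _ _ hp hq
  | mul_X p i hp => exact map_mul (Ideal.Quotient.mk (rgRel d)) p (X i) ▸ mul_gen _ i hp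

theorem algHom_ext {A : Type*} [Semiring A] [Algebra (ZMod 2) A] {f g : RGH d →ₐ[ZMod 2] A}
    (h : ∀ i, f (gen d i) = g (gen d i)) : f = g :=
  Ideal.Quotient.algHom_ext _ (MvPolynomial.algHom_ext h)

/-- The universal property of `H`: the algebra map sending the generators to elements `f i` that
satisfy the defining relations. -/
noncomputable def lift {A : Type*} [CommRing A] [Algebra (ZMod 2) A] (f : Fin d → A)
    (h0 : f 0 ^ 2 = 0) (hf : ∀ i ≠ 0, f i ^ 2 = f 0 * f i) : RGH d →ₐ[ZMod 2] A :=
  Ideal.Quotient.liftₐ (rgRel d) (aeval f) fun p hp => by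
    suffices rgRel d ≤ RingHom.ker (aeval f) from this hp
    refine Ideal.span_le.mpr ?_
    rintro _ (rfl | ⟨i, hi, rfl⟩)
    · simp [RingHom.mem_ker, h0]
    · simp [RingHom.mem_ker, hf i hi]

@[simp]
theorem lift_gen {A : Type*} [CommRing A] [Algebra (ZMod 2) A] (f : Fin d → A)
    (h0 : f 0 ^ 2 = 0) (hf : ∀ i ≠ 0, f i ^ 2 = f 0 * f i) (i : Fin d) :
    lift f h0 hf (gen d i) = f i :=
  aeval_X f i

variable (d) in
/-- Reduction modulo `H_+²`: the quotient `H / H_+²` is the trivial square-zero extension of `F₂`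
by the space of linear forms, written in coordinates. -/
noncomputable def truncate : RGH d →ₐ[ZMod 2] TrivSqZeroExt (ZMod 2) (Fin d → ZMod 2) :=
  lift (fun i => .inr (Pi.single i 1)) (by simp [pow_two]) (by simp [pow_two])

variable (d) in
/-- The linear part of an element of `H`, as its vector of coordinates with respect to the
generators. -/
noncomputable def linearPart : RGH d →ₗ[ZMod 2] (Fin d → ZMod 2) :=
  TrivSqZeroExt.sndHom (ZMod 2) _ ∘ₗ (truncate d).toLinearMap

theorem snd_truncate (h : RGH d) : (truncate d h).snd = linearPart d h := rfl

@[simp]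
theorem truncate_gen (i : Fin d) : truncate d (gen d i) = .inr (Pi.single i 1) :=
  lift_gen _ _ _ i

@[simp]
theorem linearPart_gen (i : Fin d) : linearPart d (gen d i) = Pi.single i 1 := by
  rw [← snd_truncate, truncate_gen, TrivSqZeroExt.snd_inr]

instance : Nontrivial (RGH d) :=
  (truncate d).toRingHom.domain_nontrivial

theorem truncate_of_mem_Hplus {h : RGH d} (hh : h ∈ Hplus d) :
    truncate d h = .inr (linearPart d h) := by
  have hle : Hplus d ≤
      RingHom.ker ((TrivSqZeroExt.fstHom (ZMod 2) (ZMod 2) _).comp (truncate d)) := by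
    refine Ideal.span_le.mpr ?_
    rintro _ ⟨i, rfl⟩
    simp [RingHom.mem_ker]
  exact TrivSqZeroExt.ext (hle hh) rfl

theorem linearPart_mul_of_mem_Hplus (a : RGH d) {b : RGH d} (hb : b ∈ Hplus d) :
    linearPart d (a * b) = (truncate d a).fst • linearPart d b := by
  rw [← snd_truncate, map_mul, truncate_of_mem_Hplus hb]
  simp

theorem mem_Hplus_sq_of_linearPart_eq_zero {h : RGH d} (hh : h ∈ Hplus d)
    (h0 : linearPart d h = 0) : h ∈ Hplus d ^ 2 := by
  have hgen (i : Fin d) : gen d i ∈ Hplus d := Ideal.subset_span ⟨i, rfl⟩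
  let π := Ideal.Quotient.mkₐ (ZMod 2) (Hplus d ^ 2)
  let g := π.toLinearMap ∘ₗ Fintype.linearCombination (ZMod 2) (gen d)
  have hg (x y) : g x * g y = 0 := by
    have hmem (x) : Fintype.linearCombination (ZMod 2) (gen d) x ∈ Hplus d := by
      rw [Fintype.linearCombination_apply]
      exact Submodule.sum_mem _ fun i _ => Submodule.smul_of_tower_mem _ _ (hgen i)
    refine Ideal.Quotient.eq_zero_iff_mem.mpr ?_
    rw [pow_two]
    exact Ideal.mul_mem_mul (hmem x) (hmem y)
  let ψ := TrivSqZeroExt.lift (Algebra.ofId (ZMod 2) _) g hg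
    (fun r x => by rw [map_smul, Algebra.ofId_apply, ← Algebra.smul_def])
    (fun r x => by rw [op_smul_eq_smul, map_smul, Algebra.ofId_apply, mul_comm (g x),
      ← Algebra.smul_def])
  have hψ : ψ.comp (truncate d) = π := algHom_ext fun i => by simp [ψ, g]
  have hπ : π h = 0 := by
    rw [← hψ, AlgHom.comp_apply, truncate_of_mem_Hplus hh, h0, TrivSqZeroExt.inr_zero, map_zero]
  exact Ideal.Quotient.eq_zero_iff_mem.mp hπ

theorem exists_linearPart_notMem {X : Set (RGH d)} (hX : Ideal.span X = Hplus d)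
    {S : Submodule (ZMod 2) (Fin d → ZMod 2)} (hS : S ≠ ⊤) : ∃ x ∈ X, linearPart d x ∉ S := by
  by_contra! hXS
  have hspan (h) (hh : h ∈ Ideal.span X) : linearPart d h ∈ S := by
    induction hh using Submodule.span_induction with
    | mem x hx => exact hXS x hx
    | zero => simp
    | add x y _ _ hx hy => simpa using S.add_mem hx hy
    | smul a x hx ih =>
      rw [smul_eq_mul, linearPart_mul_of_mem_Hplus a (hX ▸ hx)]
      exact S.smul_mem _ ih
  refine hS (top_unique ?_)
  rw [← (Pi.basisFun (ZMod 2) (Fin d)).span_eq, Submodule.span_le]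
  rintro _ ⟨i, rfl⟩
  rw [Pi.basisFun_apply, ← linearPart_gen]
  exact hspan _ (hX ▸ Ideal.subset_span ⟨i, rfl⟩)

/-- The algebra `(F₂ ⊕ V)[ω] / (ω² - t ω)`, where `V` is the space of linear forms, with `V² = 0`,
and `t` is the coordinate vector of `gen d 0`. Products of elements of `H` are evaluated in it up
to degree two. -/
abbrev TestAlgebra (d : ℕ) [NeZero d] :=
  QuadraticAlgebra (TrivSqZeroExt (ZMod 2) (Fin d → ZMod 2)) 0 (.inr (Pi.single 0 1))

/-- The evaluation `v ↦ v + vᵢ ω` on linear forms. It is compatible with the relations because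
`(v + vᵢ ω)² = vᵢ t ω = t (v + vᵢ ω)`. -/
noncomputable def toTestAlgebra (i : Fin d) (hi : i ≠ 0) : RGH d →ₐ[ZMod 2] TestAlgebra d :=
  lift (fun j => ⟨.inr (Pi.single j 1), .inl ((Pi.single j 1 : Fin d → ZMod 2) i)⟩)
    (by rw [pow_two]; ext <;> simp [hi])
    (fun j hj => by
      rw [pow_two]
      obtain rfl | hij := eq_or_ne i j
      · ext <;> simp [hi, CharTwo.add_self_eq_zero]
      · ext <;> simp [hi, hij])

theorem toTestAlgebra_gen {i : Fin d} (hi : i ≠ 0) (j : Fin d) :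
    toTestAlgebra i hi (gen d j) =
      ⟨.inr (Pi.single j 1), .inl ((Pi.single j 1 : Fin d → ZMod 2) i)⟩ :=
  lift_gen _ _ _ j

theorem re_toTestAlgebra {i : Fin d} (hi : i ≠ 0) (h : RGH d) :
    (toTestAlgebra i hi h).re = truncate d h := by
  induction h using induction_on with
  | algebraMap c => rw [AlgHom.commutes, AlgHom.commutes]; rfl
  | add a b ha hb => simp only [map_add, QuadraticAlgebra.re_add, ha, hb]
  | mul_gen a j ha => simp [ha, toTestAlgebra_gen]

theorem fst_im_toTestAlgebra {i : Fin d} (hi : i ≠ 0) (h : RGH d) :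
    (toTestAlgebra i hi h).im.fst = linearPart d h i := by
  induction h using induction_on with
  | algebraMap c => rw [← snd_truncate, AlgHom.commutes, AlgHom.commutes]; rfl
  | add a b ha hb => simp [ha, hb]
  | mul_gen a j _ => simp [toTestAlgebra_gen, re_toTestAlgebra, ← snd_truncate]

theorem smul_linearPart_add_eq_zero_of_mul_eq_zero {a b : RGH d} (ha : a ∈ Hplus d)
    (hb : b ∈ Hplus d) (hab : a * b = 0) {i : Fin d} (hi : i ≠ 0) :
    linearPart d b i • linearPart d a +
      linearPart d a i • (linearPart d b + linearPart d b i • Pi.single 0 1) = 0 := by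
  have h : ((toTestAlgebra i hi a * toTestAlgebra i hi b).im).snd = 0 := by
    rw [← map_mul, hab, map_zero, QuadraticAlgebra.im_zero, TrivSqZeroExt.snd_zero]
  rw [smul_add, ← add_assoc, smul_comm]
  simpa [re_toTestAlgebra, fst_im_toTestAlgebra, truncate_of_mem_Hplus ha,
    truncate_of_mem_Hplus hb] using h

theorem linearPart_eq_add_of_mul_eq_zero {a b : RGH d} (ha : a ∈ Hplus d) (hb : b ∈ Hplus d)
    (hab : a * b = 0) (ha0 : linearPart d a ≠ 0)
    (hbt : linearPart d b ∉ Submodule.span (ZMod 2) {Pi.single 0 1}) :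
    linearPart d a = linearPart d b + Pi.single 0 1 := by
  have eq_one_of_ne_zero : ∀ c : ZMod 2, c ≠ 0 → c = 1 := by decide
  obtain ⟨i, hi, hbi⟩ := exists_ne_apply_ne_zero_of_notMem_span_single hbt
  have hbi := eq_one_of_ne_zero _ hbi
  have h := smul_linearPart_add_eq_zero_of_mul_eq_zero ha hb hab hi
  rw [hbi, one_smul, one_smul, add_eq_zero_iff_eq_neg, ZModModule.neg_eq_self] at h
  have hai : linearPart d a i ≠ 0 := fun hai => ha0 (by rw [h, hai, zero_smul])
  rwa [eq_one_of_ne_zero _ hai, one_smul] at h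

theorem linearPart_ne_of_mem_span_sdiff_singleton {X : Set (RGH d)} (hX : Ideal.span X = Hplus d)
    (hmin : ∀ Y ⊂ X, Ideal.span Y ≠ Hplus d) {x y : RGH d} (hx : x ∈ X)
    (hy : y ∈ Ideal.span (X \ {x})) : linearPart d x ≠ linearPart d y := by
  intro h
  have hxH : x ∈ Hplus d := hX ▸ Ideal.subset_span hx
  have hyH : y ∈ Hplus d := hX ▸ Ideal.span_mono Set.sdiff_subset hy
  have hsq : x - y ∈ Hplus d ^ 2 :=
    mem_Hplus_sq_of_linearPart_eq_zero (sub_mem hxH hyH) (by rw [map_sub, h, sub_self])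
  have hjac : Hplus d ≤ Ideal.jacobson ⊥ :=
    Hplus_le_nilradical.trans Ideal.radical_le_jacobson
  refine hmin _ (Set.sdiff_singleton_ssubset.mpr hx)
    (span_sdiff_singleton_eq_of_mem_sup_sq Hplus_fg hjac hX ?_)
  simpa using Submodule.add_mem_sup hy hsq

theorem exists_linearPart_eq_add {X : Set (RGH d)} (hX : Ideal.span X = Hplus d)
    (hmin : ∀ Y ⊂ X, Ideal.span Y ≠ Hplus d) {x : RGH d} (hx : x ∈ X)
    (hann : ∃ Z ⊆ X, colonIdeal ⊥ x = Ideal.span Z)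
    (hxt : linearPart d x ∉ Submodule.span (ZMod 2) {Pi.single 0 1}) :
    ∃ z ∈ X, linearPart d z = linearPart d x + Pi.single 0 1 := by
  have hXH : X ⊆ Hplus d := hX ▸ Ideal.subset_span
  obtain ⟨Z, hZX, hZ⟩ := hann
  obtain rfl | ⟨z, hz⟩ := Z.eq_empty_or_nonempty
  · exact absurd (hZ.trans Ideal.span_empty)
      (colonIdeal_bot_ne_bot (Hplus_le_nilradical (hXH hx)))
  · have hzx : z ∈ colonIdeal ⊥ x := hZ ▸ Ideal.subset_span hz
    have hz0 : linearPart d z ≠ 0 := by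
      simpa using linearPart_ne_of_mem_span_sdiff_singleton hX hmin (hZX hz) (zero_mem _)
    exact ⟨z, hZX hz, linearPart_eq_add_of_mul_eq_zero (hXH (hZX hz)) (hXH hx) hzx hz0 hxt⟩

end RGH

open RGH

theorem stmt14_general (d : ℕ) [NeZero d] (hd : 3 ≤ d) :
    ¬ ∃ X : Set (RGH d),
        Ideal.span X = Hplus d ∧
        (∀ Y ⊂ X, Ideal.span Y ≠ Hplus d) ∧
        (∀ z ∈ X, ∃ Z ⊆ X, colonIdeal ⊥ z = Ideal.span Z) := by
  rintro ⟨X, hX, hmin, hann⟩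
  let t : Fin d → ZMod 2 := Pi.single 0 1
  have hspan (v) : Submodule.span (ZMod 2) {t, v} ≠ ⊤ := span_pair_ne_top (by simpa using hd) t v
  obtain ⟨w, hw, hwt⟩ := exists_linearPart_notMem hX (hspan t)
  rw [Set.pair_eq_singleton] at hwt
  obtain ⟨m, hm, hmtw⟩ := exists_linearPart_notMem hX (hspan (linearPart d w))
  have hmt : linearPart d m ∉ Submodule.span (ZMod 2) {t} :=
    fun h => hmtw (Submodule.span_mono (by simp) h)
  obtain ⟨w', hw', hww'⟩ := exists_linearPart_eq_add hX hmin hw (hann w hw) hwt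
  obtain ⟨m', hm', hmm'⟩ := exists_linearPart_eq_add hX hmin hm (hann m hm) hmt
  have hne {z} (hz : linearPart d z ∈ Submodule.span (ZMod 2) {t, linearPart d w}) : z ≠ m :=
    fun h => hmtw (h ▸ hz)
  have hwm : w ≠ m := hne (Submodule.subset_span (by simp))
  have hw'm : w' ≠ m := hne (Submodule.mem_span_pair.mpr ⟨1, 1, by simp [hww', t, add_comm]⟩)
  have hm'm : m' ≠ m := fun h => by simp [h] at hmm'
  have hsum : w + w' + m' ∈ Ideal.span (X \ {m}) :=
    add_mem (add_mem (Ideal.subset_span ⟨hw, hwm⟩) (Ideal.subset_span ⟨hw', hw'm⟩))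
      (Ideal.subset_span ⟨hm', hm'm⟩)
  refine linearPart_ne_of_mem_span_sdiff_singleton hX hmin hm hsum ?_
  rw [map_add, map_add, hww', hmm', ← add_assoc (linearPart d w), ZModModule.add_self, zero_add,
    add_left_comm, ZModModule.add_self, add_zero]

/-- For `d ≥ 3`, the algebra `H = F₂[T, X₂, …, X_d]/(T², X_i² − T·X_i)`
is not strongly Koszul: no minimal system `X` of homogeneous generators of `H_+` has all
colon ideals `(Y) : x` (for `Y ⊊ X`, `x ∈ X \ Y`) generated by subsets of `X`. -/
theorem stmt14 (d : ℕ) [NeZero d] (hd : 3 ≤ d) :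
    ¬ ∃ X : Set (RGH d),
        (∀ z ∈ X, IsHomogElem d z) ∧
        Ideal.span X = Hplus d ∧
        (∀ Y ⊂ X, Ideal.span Y ≠ Hplus d) ∧
        (∀ Y ⊂ X, ∀ z ∈ X \ Y,
          ∃ Z ⊆ X, colonIdeal (Ideal.span Y) z = Ideal.span Z) := by
  rintro ⟨X, -, hX, hmin, hcolon⟩
  exact stmt14_general d hd ⟨X, hX, hmin, fun z hz => by
    simpa using hcolon ∅ (Set.empty_ssubset.mpr ⟨z, hz⟩) z (by simpa using hz)⟩
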